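/- arXiv:0709.2677 — 3 statements merged into one kernel-verified Lean document; each statement's English description precedes it below -/
import Mathlib

section
/- Let p ∈ {2,3,4} and let f satisfy the stated structural assumption. Let Q be a positive even C³ solution of Q'' + f(Q) = Q with Q(x) → 0 and Q'(x) → 0 as |x| → ∞ and Q(x) ≤ K₀ e^{−|x|} for all x. Define φ(x) = −Q'(x)/Q(x). Then: (i) φ is odd, φ(x) → 1 as x → +∞ and φ(x) → −1 as x → −∞; (ii) there exists C > 0 such that |φ'(x)| + |φ''(x)| + |φ'''(x)| ≤ C e^{−|x|} for all x; (iii) there exists C > 0 such that |1 − φ(x)²| ≤ C e^{−|x|} for all x. Moreover φ² = 1 − 2F(Q)/Q² and φ' = (Q f(Q) − 2F(Q))/Q² pointwise. -/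
/-!
Multiplying `Q'' + f(Q) = Q` by `2 Q'` and integrating from infinity gives the energy identity
`Q'² = Q² - 2 F(Q)`, whence `φ² = 1 - 2 F(Q) / Q²` and `φ' = g(Q)` with
`g(s) = (s f(s) - 2 F(s)) / s²`.

Since `f₁(u) = o(u ^ p)` with `p ≥ 2`, both `f` and `f'` vanish at `0`. As `f` is `C²`, this gives
`f'' = O(1)`, `f' = O(s)`, `f = O(s²)` and `F = O(s³)` on bounded intervals `(0, M]`, so
`g = O(s)`, `g' = O(1)` and `g'' = O(1 / s)`. The function `φ` is bounded, so `Q' = O(Q)`, and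
`Q'' = Q - f(Q) = O(Q)`. Therefore `1 - φ²`, `φ' = g(Q)`, `φ'' = g'(Q) Q'` and
`φ''' = g''(Q) Q'² + g'(Q) Q''` are all `O(Q)`, and `Q` decays like `exp (-|x|)`.

Finally `φ² → 1`, so `Q'` has no zero near `+∞`. It must be negative there because `Q` is positive
and tends to `0`; hence `φ → 1` at `+∞`. Oddness of `φ` gives the limit at `-∞`.
-/

open MeasureTheory Filter Topology Set

noncomputable section

/-- Structural assumption on the nonlinearity: `f u = u ^ p + f₁ u` with `f₁` of class
`C^{p+4}` and `f₁ u / u ^ p → 0` as `u → 0`. -/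
def IsGKdVNonlinearity (p : ℕ) (f : ℝ → ℝ) : Prop :=
  ∃ f₁ : ℝ → ℝ, (∀ u, f u = u ^ p + f₁ u) ∧ ContDiff ℝ (p + 4 : ℕ) f₁ ∧
    Filter.Tendsto (fun u => f₁ u / u ^ p) (𝓝[≠] (0:ℝ)) (𝓝 0)

/-- Primitive `F(s) = ∫₀ˢ f`. -/
def Fprim (f : ℝ → ℝ) (s : ℝ) : ℝ := ∫ t in (0:ℝ)..s, f t

/-! ### The nonlinearity near the origin -/

/-- A bound `|h'| ≤ B` on `[0, s)` gives `|h s| ≤ B s` when `h 0 = 0`. -/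
lemma abs_le_mul_of_abs_deriv_le {h h' : ℝ → ℝ} (hd : ∀ x, HasDerivAt h (h' x) x) (h0 : h 0 = 0)
    {B s : ℝ} (hs : 0 ≤ s) (hB : ∀ x ∈ Ico 0 s, |h' x| ≤ B) : |h s| ≤ B * s := by
  have := norm_image_sub_le_of_norm_deriv_le_segment' (f := h) (f' := h') (a := 0) (b := s) (C := B)
    (fun x _ => (hd x).hasDerivWithinAt) (fun x hx => by simpa using hB x hx) s ⟨hs, le_rfl⟩
  simpa [h0] using this

lemma IsGKdVNonlinearity.contDiff {p : ℕ} {f : ℝ → ℝ} (hf : IsGKdVNonlinearity p f) :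
    ContDiff ℝ 2 f := by
  obtain ⟨f₁, hff, hc, -⟩ := hf
  have h2 : ContDiff ℝ 2 f₁ := by
    refine hc.of_le ?_
    have : ((2 : ℕ) : WithTop ℕ∞) ≤ ((p + 4 : ℕ) : WithTop ℕ∞) := by
      exact_mod_cast (by omega : 2 ≤ p + 4)
    exact_mod_cast this
  rw [funext hff]
  exact (contDiff_id.pow p).add h2

/-- The condition `f₁ u / u ^ p → 0` says nothing about `f₁ 0` itself; its vanishing comes from the
continuity of `f₁`. -/
lemma IsGKdVNonlinearity.map_zero {p : ℕ} {f : ℝ → ℝ} (hp : 2 ≤ p)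
    (hf : IsGKdVNonlinearity p f) : f 0 = 0 := by
  obtain ⟨f₁, hff, hc, hl⟩ := hf
  have h1 : Tendsto f₁ (𝓝[≠] (0 : ℝ)) (𝓝 (f₁ 0)) :=
    hc.continuous.continuousAt.mono_left nhdsWithin_le_nhds
  have h2 : Tendsto (fun u : ℝ => u ^ p) (𝓝[≠] (0 : ℝ)) (𝓝 (0 ^ p)) :=
    (continuous_pow p).continuousAt.mono_left nhdsWithin_le_nhds
  have h3 : Tendsto f₁ (𝓝[≠] (0 : ℝ)) (𝓝 (0 * 0 ^ p)) := by
    refine (hl.mul h2).congr' ?_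
    filter_upwards [self_mem_nhdsWithin] with u hu
    have hu : u ≠ 0 := hu
    field_simp
  have h4 := tendsto_nhds_unique h1 h3
  have hp0 : p ≠ 0 := by omega
  rw [hff, h4]
  simp [hp0]

lemma IsGKdVNonlinearity.hasDerivAt_zero {p : ℕ} {f : ℝ → ℝ} (hp : 2 ≤ p)
    (hf : IsGKdVNonlinearity p f) : HasDerivAt f 0 0 := by
  have h0 := hf.map_zero hp
  obtain ⟨f₁, hff, hc, hl⟩ := hf
  rw [hasDerivAt_iff_tendsto_slope]
  have h2 : Tendsto (fun u : ℝ => u ^ (p - 1)) (𝓝[≠] (0 : ℝ)) (𝓝 (0 ^ (p - 1))) :=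
    (continuous_pow (p - 1)).continuousAt.mono_left nhdsWithin_le_nhds
  have hp0 : p - 1 ≠ 0 := by omega
  rw [zero_pow hp0] at h2
  have h3 := h2.add (hl.mul h2)
  simp only [mul_zero, add_zero] at h3
  refine h3.congr' ?_
  filter_upwards [self_mem_nhdsWithin] with u hu
  have hu : u ≠ 0 := hu
  obtain ⟨q, rfl⟩ : ∃ q, p = q + 1 := ⟨p - 1, by omega⟩
  rw [slope_def_field, h0, hff u]
  simp only [Nat.add_sub_cancel, pow_succ]
  field_simp
  ring

lemma hasDerivAt_Fprim {f : ℝ → ℝ} (hf : Continuous f) (s : ℝ) :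
    HasDerivAt (Fprim f) (f s) s :=
  (hf.integral_hasStrictDerivAt 0 s).hasDerivAt

/-- Taylor bounds at the origin for `f`, its first two derivatives and its primitive. -/
lemma exists_taylor_bounds {f : ℝ → ℝ} (hf : ContDiff ℝ 2 f) (h0 : f 0 = 0)
    (h0' : deriv f 0 = 0) (M : ℝ) :
    ∃ C : ℝ, 0 ≤ C ∧ ∀ s, 0 < s → s ≤ M → |deriv (deriv f) s| ≤ C ∧ |deriv f s| ≤ C * s ∧
      |f s| ≤ C * s ^ 2 ∧ |Fprim f s| ≤ C * s ^ 3 := by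
  have hf' : ContDiff ℝ 1 (deriv f) := ContDiff.deriv' (by rw [one_add_one_eq_two]; exact hf)
  have hc : Continuous (deriv (deriv f)) := hf'.continuous_deriv le_rfl
  obtain ⟨C, hC⟩ := (isCompact_Icc (a := (0 : ℝ)) (b := M)).exists_bound_of_continuousOn
    hc.continuousOn
  have d1 : ∀ x, HasDerivAt (deriv f) (deriv (deriv f) x) x := fun x =>
    (hf'.differentiable (by norm_num) x).hasDerivAt
  have d0 : ∀ x, HasDerivAt f (deriv f x) x := fun x =>
    (hf.differentiable (by norm_num) x).hasDerivAt
  have dF := hasDerivAt_Fprim hf.continuous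
  have hC0 : 0 ≤ |C| := abs_nonneg C
  have b2 : ∀ s, 0 ≤ s → s ≤ M → |deriv (deriv f) s| ≤ |C| := fun s h1 h2 =>
    (hC s ⟨h1, h2⟩).trans (le_abs_self C)
  have b1 : ∀ s, 0 ≤ s → s ≤ M → |deriv f s| ≤ |C| * s := fun s h1 h2 =>
    abs_le_mul_of_abs_deriv_le d1 h0' h1 fun x hx => b2 x hx.1 (hx.2.le.trans h2)
  have b0 : ∀ s, 0 ≤ s → s ≤ M → |f s| ≤ |C| * s ^ 2 := fun s h1 h2 => by
    have := abs_le_mul_of_abs_deriv_le d0 h0 h1 (B := |C| * s) fun x hx =>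
      (b1 x hx.1 (hx.2.le.trans h2)).trans (by have := hx.2.le; gcongr)
    linarith
  have bF : ∀ s, 0 ≤ s → s ≤ M → |Fprim f s| ≤ |C| * s ^ 3 := fun s h1 h2 => by
    have := abs_le_mul_of_abs_deriv_le dF (by simp [Fprim]) h1 (B := |C| * s ^ 2) fun x hx =>
      (b0 x hx.1 (hx.2.le.trans h2)).trans (by have := hx.2.le; have := hx.1; gcongr)
    linarith
  exact ⟨|C|, hC0, fun s h1 h2 => ⟨b2 s h1.le h2, b1 s h1.le h2, b0 s h1.le h2, bF s h1.le h2⟩⟩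

/-! ### The function `g` -/

/-- The function `g(s) = (s f(s) - 2 F(s)) / s²`, for which `φ' = g(Q)`. -/
def gFun (f : ℝ → ℝ) (s : ℝ) : ℝ := (s * f s - 2 * Fprim f s) / s ^ 2

/-- The derivative of `gFun f` on `s ≠ 0`. -/
def gFun' (f : ℝ → ℝ) (s : ℝ) : ℝ := deriv f s / s - 3 * f s / s ^ 2 + 4 * Fprim f s / s ^ 3

/-- The second derivative of `gFun f` on `s ≠ 0`. -/
def gFun'' (f : ℝ → ℝ) (s : ℝ) : ℝ :=
  deriv (deriv f) s / s - 4 * deriv f s / s ^ 2 + 10 * f s / s ^ 3 - 12 * Fprim f s / s ^ 4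

lemma hasDerivAt_gFun {f : ℝ → ℝ} (hf : ContDiff ℝ 2 f) {s : ℝ} (hs : s ≠ 0) :
    HasDerivAt (gFun f) (gFun' f s) s := by
  have d0 : HasDerivAt f (deriv f s) s := (hf.differentiable (by norm_num) s).hasDerivAt
  have dF := hasDerivAt_Fprim hf.continuous s
  have h := (((hasDerivAt_id s).mul d0).sub (dF.const_mul 2)).div ((hasDerivAt_id s).pow 2)
    (pow_ne_zero 2 hs)
  refine h.congr_deriv ?_
  simp only [gFun', id, Pi.mul_apply, Pi.sub_apply, Pi.pow_apply]
  field_simp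
  push_cast
  ring

lemma hasDerivAt_gFun' {f : ℝ → ℝ} (hf : ContDiff ℝ 2 f) {s : ℝ} (hs : s ≠ 0) :
    HasDerivAt (gFun' f) (gFun'' f s) s := by
  have d0 : HasDerivAt f (deriv f s) s := (hf.differentiable (by norm_num) s).hasDerivAt
  have hf' : ContDiff ℝ 1 (deriv f) := ContDiff.deriv' (by rw [one_add_one_eq_two]; exact hf)
  have d1 : HasDerivAt (deriv f) (deriv (deriv f) s) s :=
    (hf'.differentiable (by norm_num) s).hasDerivAt
  have dF := hasDerivAt_Fprim hf.continuous s
  have h := ((d1.div (hasDerivAt_id s) hs).sub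
    ((d0.const_mul 3).div ((hasDerivAt_id s).pow 2) (pow_ne_zero 2 hs))).add
    ((dF.const_mul 4).div ((hasDerivAt_id s).pow 3) (pow_ne_zero 3 hs))
  refine h.congr_deriv ?_
  simp only [gFun'', id, Pi.pow_apply]
  field_simp
  push_cast
  ring

/-! ### The soliton profile -/

/-- If a positive `Q` tends to `0` and `Q'` has no zero on `[X, ∞)`, then `Q' < 0` there. -/
lemma deriv_neg_of_ne_zero {Q : ℝ → ℝ} (hQ : ContDiff ℝ 1 Q) (hpos : ∀ x, 0 < Q x)
    (htop : Tendsto Q atTop (𝓝 0)) {X : ℝ} (hne : ∀ x, X ≤ x → deriv Q x ≠ 0) :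
    ∀ x, X ≤ x → deriv Q x < 0 := by
  obtain ⟨Z, hZQ, hZX⟩ :=
    ((htop.eventually_lt_const (hpos X)).and (eventually_gt_atTop X)).exists
  obtain ⟨y, hy, hyd⟩ := exists_deriv_eq_slope Q hZX hQ.continuous.continuousOn
    (hQ.differentiable (by norm_num)).differentiableOn
  have hyneg : deriv Q y < 0 := by
    rw [hyd]
    exact div_neg_of_neg_of_pos (by linarith) (by linarith)
  intro x hx
  by_contra hcon
  obtain ⟨z, hz, hz0⟩ := (isPreconnected_Ici (a := X)).intermediate_value (mem_Ici.2 hy.1.le)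
    (mem_Ici.2 hx) (hQ.continuous_deriv le_rfl).continuousOn ⟨hyneg.le, not_lt.1 hcon⟩
  exact hne z hz hz0

/-- The energy `Q'² - Q² + 2 F(Q)` of a decaying solution of `Q'' + f(Q) = Q` vanishes. -/
lemma energy_identity {f Q : ℝ → ℝ} (hf : Continuous f) (hQ : ContDiff ℝ 2 Q)
    (hQeq : ∀ x, deriv (deriv Q) x + f (Q x) = Q x) (htop : Tendsto Q atTop (𝓝 0))
    (htop' : Tendsto (deriv Q) atTop (𝓝 0)) (x : ℝ) :
    deriv Q x ^ 2 = Q x ^ 2 - 2 * Fprim f (Q x) := by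
  have hQ' : ContDiff ℝ 1 (deriv Q) := ContDiff.deriv' (by rw [one_add_one_eq_two]; exact hQ)
  set E : ℝ → ℝ := fun y => deriv Q y ^ 2 - Q y ^ 2 + 2 * Fprim f (Q y) with hE
  have dQ : ∀ y, HasDerivAt Q (deriv Q y) y := fun y =>
    (hQ.differentiable (by norm_num) y).hasDerivAt
  have dQ' : ∀ y, HasDerivAt (deriv Q) (deriv (deriv Q) y) y := fun y =>
    (hQ'.differentiable (by norm_num) y).hasDerivAt
  have dE : ∀ y, HasDerivAt E 0 y := fun y => by
    have h := (((dQ' y).pow 2).sub ((dQ y).pow 2)).add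
      (((hasDerivAt_Fprim hf (Q y)).comp y (dQ y)).const_mul 2)
    refine h.congr_deriv ?_
    push_cast
    linear_combination 2 * deriv Q y * hQeq y
  have hconst : ∀ y, E y = E x := fun y =>
    is_const_of_deriv_eq_zero (fun z => (dE z).differentiableAt) (fun z => (dE z).deriv) y x
  have hF0 : Tendsto (fun y => Fprim f (Q y)) atTop (𝓝 0) := by
    have h := (hasDerivAt_Fprim hf 0).continuousAt.tendsto.comp htop
    simpa [Fprim, Function.comp_def] using h
  have hlim : Tendsto E atTop (𝓝 0) := by
    simpa using ((htop'.pow 2).sub (htop.pow 2)).add (hF0.const_mul 2)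
  have hx : E x = 0 :=
    tendsto_nhds_unique (tendsto_const_nhds.congr fun y => (hconst y).symm) hlim
  simp only [hE] at hx
  linarith

/-- Properties of `φ = -Q'/Q`. -/
theorem properties_of_phi
    (p : ℕ) (hp : p = 2 ∨ p = 3 ∨ p = 4)
    (f : ℝ → ℝ) (hf : IsGKdVNonlinearity p f)
    (Q : ℝ → ℝ) (hQreg : ContDiff ℝ 3 Q)
    (hQpos : ∀ x, 0 < Q x) (hQeven : ∀ x, Q (-x) = Q x)
    (hQeq : ∀ x, deriv (deriv Q) x + f (Q x) = Q x)
    (hQtop : Filter.Tendsto Q Filter.atTop (𝓝 0))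
    (hQbot : Filter.Tendsto Q Filter.atBot (𝓝 0))
    (hQ'top : Filter.Tendsto (deriv Q) Filter.atTop (𝓝 0))
    (hQ'bot : Filter.Tendsto (deriv Q) Filter.atBot (𝓝 0))
    (K₀ : ℝ) (hQbound : ∀ x, Q x ≤ K₀ * Real.exp (-|x|))
    (φ : ℝ → ℝ) (hφ : ∀ x, φ x = -(deriv Q x) / Q x) :
    -- (i) oddness and limits at ±∞
    (∀ x, φ (-x) = -φ x) ∧
    Filter.Tendsto φ Filter.atTop (𝓝 1) ∧
    Filter.Tendsto φ Filter.atBot (𝓝 (-1)) ∧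
    -- (ii) exponential decay of the derivatives
    (∃ C > (0:ℝ), ∀ x,
      |deriv φ x| + |deriv (deriv φ) x| + |deriv (deriv (deriv φ)) x|
        ≤ C * Real.exp (-|x|)) ∧
    -- (iii) exponential decay of `1 - φ²`
    (∃ C > (0:ℝ), ∀ x, |1 - (φ x) ^ 2| ≤ C * Real.exp (-|x|)) ∧
    -- pointwise identities
    (∀ x, (φ x) ^ 2 = 1 - 2 * Fprim f (Q x) / (Q x) ^ 2) ∧
    (∀ x, deriv φ x = (Q x * f (Q x) - 2 * Fprim f (Q x)) / (Q x) ^ 2) := by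
  have hp2 : 2 ≤ p := by omega
  have hf2 : ContDiff ℝ 2 f := hf.contDiff
  have hQ2 : ContDiff ℝ 2 Q := hQreg.of_le (by norm_num)
  have hQ' : ContDiff ℝ 1 (deriv Q) := ContDiff.deriv' (by rw [one_add_one_eq_two]; exact hQ2)
  have dQ : ∀ y, HasDerivAt Q (deriv Q y) y := fun y =>
    (hQ2.differentiable (by norm_num) y).hasDerivAt
  have dQ' : ∀ y, HasDerivAt (deriv Q) (deriv (deriv Q) y) y := fun y =>
    (hQ'.differentiable (by norm_num) y).hasDerivAt
  have hQne : ∀ x, Q x ≠ 0 := fun x => (hQpos x).ne'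
  have hen := energy_identity hf2.continuous hQ2 hQeq hQtop hQ'top
  have hsq : ∀ x, φ x ^ 2 = 1 - 2 * Fprim f (Q x) / Q x ^ 2 := fun x => by
    rw [hφ, div_pow, neg_sq, hen]
    have := hQne x
    field_simp
  have dφ : ∀ x, HasDerivAt φ (gFun f (Q x)) x := fun x => by
    rw [funext hφ]
    refine ((dQ' x).neg.div (dQ x) (hQne x)).congr_deriv ?_
    have := hQne x
    simp only [gFun, Pi.neg_apply]
    field_simp
    linear_combination (-Q x) * hQeq x + hen x
  have hφ1 : deriv φ = fun x => gFun f (Q x) := funext fun x => (dφ x).deriv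
  have hφ2 : deriv (deriv φ) = fun x => gFun' f (Q x) * deriv Q x := by
    rw [hφ1]
    exact funext fun x => ((hasDerivAt_gFun hf2 (hQne x)).comp x (dQ x)).deriv
  have hφ3 : deriv (deriv (deriv φ)) = fun x =>
      gFun'' f (Q x) * deriv Q x * deriv Q x + gFun' f (Q x) * deriv (deriv Q) x := by
    rw [hφ2]
    exact funext fun x =>
      (((hasDerivAt_gFun' hf2 (hQne x)).comp x (dQ x)).mul (dQ' x)).deriv
  have hodd : ∀ x, φ (-x) = -φ x := fun x => by
    have h1 : deriv Q (-x) = -deriv Q x := by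
      have h := deriv_comp_neg Q x
      rw [show (fun y => Q (-y)) = Q from funext hQeven] at h
      linarith
    rw [hφ, hφ, h1, hQeven]
    ring
  have hK : 0 < K₀ := by simpa using (hQpos 0).trans_le (hQbound 0)
  have hQK : ∀ x, Q x ≤ K₀ := fun x => (hQbound x).trans
    (mul_le_of_le_one_right hK.le (Real.exp_le_one_iff.2 (by simp)))
  obtain ⟨C, hC, hb⟩ := exists_taylor_bounds hf2 (hf.map_zero hp2) (hf.hasDerivAt_zero hp2).deriv K₀
  have h1φ : ∀ x, |1 - φ x ^ 2| ≤ 2 * C * Q x := fun x => by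
    have hq := hQpos x
    obtain ⟨-, -, -, hF⟩ := hb (Q x) hq (hQK x)
    rw [hsq, sub_sub_cancel, abs_div, abs_mul, abs_of_pos (pow_pos hq 2), div_le_iff₀ (pow_pos hq 2)]
    norm_num
    linarith
  have hlim2 : Tendsto (fun x => φ x ^ 2) atTop (𝓝 1) := by
    have h : Tendsto (fun x => 1 - φ x ^ 2) atTop (𝓝 0) :=
      squeeze_zero_norm h1φ (by simpa using hQtop.const_mul (2 * C))
    simpa using h.const_sub 1
  have htop : Tendsto φ atTop (𝓝 1) := by
    obtain ⟨X, hX⟩ := eventually_atTop.1 (hlim2.eventually_const_lt zero_lt_one)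
    have hneg := deriv_neg_of_ne_zero (hQ2.of_le (by norm_num)) hQpos hQtop (X := X)
      fun x hx h => by simpa [hφ, h] using hX x hx
    have h := hlim2.sqrt
    rw [Real.sqrt_one] at h
    refine h.congr' ?_
    filter_upwards [eventually_ge_atTop X] with x hx
    refine Real.sqrt_sq ?_
    rw [hφ]
    exact div_nonneg (by linarith [hneg x hx]) (hQpos x).le
  refine ⟨hodd, htop, ?_, ?_, ?_, hsq, fun x => (dφ x).deriv⟩
  · refine ((htop.comp tendsto_neg_atBot_atTop).neg).congr fun x => ?_
    simp [hodd]
  · -- `A` bounds `|Q'| / Q`, through `φ² ≤ 1 + 2 C K₀ ≤ A ≤ A²`; `B` bounds `|Q''| / Q`.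
    set A : ℝ := 1 + 2 * C * K₀ with hA
    set B : ℝ := 1 + C * K₀ with hB
    have hA1 : 1 ≤ A := by rw [hA]; linarith [mul_nonneg hC hK.le]
    have hB1 : 1 ≤ B := by rw [hB]; linarith [mul_nonneg hC hK.le]
    have hpos : 0 ≤ 3 * C + 8 * C * A + (27 * C * A * A + 8 * C * B) := by positivity
    refine ⟨(3 * C + 8 * C * A + (27 * C * A * A + 8 * C * B)) * K₀ + 1, by positivity, fun x => ?_⟩
    have hq := hQpos x
    set q := Q x with hqdef
    obtain ⟨e2, e1, e0, eF⟩ := hb q hq (hQK x)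
    have hφA : |φ x| ≤ A := by
      refine abs_le_of_sq_le_sq ?_ (by linarith)
      have h2 := (abs_le.1 (h1φ x)).1
      have h3 : 2 * C * q ≤ 2 * C * K₀ := mul_le_mul_of_nonneg_left (hQK x) (by linarith)
      nlinarith
    have hQ1 : |deriv Q x| ≤ A * q := by
      have : deriv Q x = -φ x * q := by rw [hφ, ← hqdef]; field_simp
      rw [this, abs_mul, abs_neg, abs_of_pos hq]
      gcongr
    have hQ2 : |deriv (deriv Q) x| ≤ B * q := by
      have : deriv (deriv Q) x = q - f q := by linarith [hQeq x]
      rw [this]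
      have h3 : C * q ^ 2 ≤ C * K₀ * q := by
        have := mul_le_mul_of_nonneg_left (hQK x) (mul_nonneg hC hq.le)
        nlinarith
      calc |q - f q| ≤ |q| + |f q| := abs_sub _ _
        _ ≤ q + C * q ^ 2 := by rw [abs_of_pos hq]; gcongr
        _ ≤ B * q := by rw [hB]; linarith
    have r2 : |deriv (deriv f) q / q| ≤ C / q := by
      rw [abs_div, abs_of_pos hq]; gcongr
    have r1 : ∀ n : ℕ, |deriv f q / q ^ n| ≤ C * q / q ^ n := fun n => by
      rw [abs_div, abs_of_pos (pow_pos hq n)]; gcongr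
    have r0 : ∀ n : ℕ, |f q / q ^ n| ≤ C * q ^ 2 / q ^ n := fun n => by
      rw [abs_div, abs_of_pos (pow_pos hq n)]; gcongr
    have rF : ∀ n : ℕ, |Fprim f q / q ^ n| ≤ C * q ^ 3 / q ^ n := fun n => by
      rw [abs_div, abs_of_pos (pow_pos hq n)]; gcongr
    have g0 : |gFun f q| ≤ 3 * C * q := by
      have h1 := abs_le.1 (r0 1)
      have h2 := abs_le.1 (rF 2)
      have e1 : C * q ^ 2 / q ^ 1 = C * q := by field_simp
      have e2 : C * q ^ 3 / q ^ 2 = C * q := by field_simp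
      rw [e1] at h1
      rw [e2] at h2
      have : gFun f q = f q / q ^ 1 - 2 * (Fprim f q / q ^ 2) := by
        rw [gFun]; field_simp
      rw [this, abs_le]
      constructor <;> linarith [h1.1, h1.2, h2.1, h2.2]
    have g1 : |gFun' f q| ≤ 8 * C := by
      have h0 := abs_le.1 (r1 1)
      have h1 := abs_le.1 (r0 2)
      have h2 := abs_le.1 (rF 3)
      have e0 : C * q / q ^ 1 = C := by field_simp
      have e1 : C * q ^ 2 / q ^ 2 = C := by field_simp
      have e2 : C * q ^ 3 / q ^ 3 = C := by field_simp
      rw [e0] at h0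
      rw [e1] at h1
      rw [e2] at h2
      have : gFun' f q = deriv f q / q ^ 1 - 3 * (f q / q ^ 2) + 4 * (Fprim f q / q ^ 3) := by
        rw [gFun']; ring
      rw [this, abs_le]
      constructor <;> linarith [h0.1, h0.2, h1.1, h1.2, h2.1, h2.2]
    have g2 : |gFun'' f q| ≤ 27 * (C / q) := by
      have h00 := abs_le.1 r2
      have h0 := abs_le.1 (r1 2)
      have h1 := abs_le.1 (r0 3)
      have h2 := abs_le.1 (rF 4)
      have e0 : C * q / q ^ 2 = C / q := by field_simp
      have e1 : C * q ^ 2 / q ^ 3 = C / q := by field_simp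
      have e2 : C * q ^ 3 / q ^ 4 = C / q := by field_simp
      rw [e0] at h0
      rw [e1] at h1
      rw [e2] at h2
      have : gFun'' f q = deriv (deriv f) q / q - 4 * (deriv f q / q ^ 2) + 10 * (f q / q ^ 3)
          - 12 * (Fprim f q / q ^ 4) := by
        rw [gFun'']; ring
      rw [this, abs_le]
      constructor <;> linarith [h00.1, h00.2, h0.1, h0.2, h1.1, h1.2, h2.1, h2.2]
    have b1 : |deriv φ x| ≤ 3 * C * q := by rw [hφ1]; exact g0
    have b2 : |deriv (deriv φ) x| ≤ 8 * C * A * q := by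
      rw [hφ2]
      calc |gFun' f q * deriv Q x| = |gFun' f q| * |deriv Q x| := abs_mul _ _
        _ ≤ 8 * C * (A * q) := by gcongr
        _ = 8 * C * A * q := by ring
    have b3 : |deriv (deriv (deriv φ)) x| ≤ (27 * C * A * A + 8 * C * B) * q := by
      rw [hφ3]
      calc |gFun'' f q * deriv Q x * deriv Q x + gFun' f q * deriv (deriv Q) x|
          ≤ |gFun'' f q * deriv Q x * deriv Q x| + |gFun' f q * deriv (deriv Q) x| :=
            abs_add_le _ _
        _ = |gFun'' f q| * |deriv Q x| * |deriv Q x| + |gFun' f q| * |deriv (deriv Q) x| := by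
            simp only [abs_mul]
        _ ≤ 27 * (C / q) * (A * q) * (A * q) + 8 * C * (B * q) := by gcongr
        _ = (27 * C * A * A + 8 * C * B) * q := by field_simp
    calc |deriv φ x| + |deriv (deriv φ) x| + |deriv (deriv (deriv φ)) x|
        ≤ (3 * C + 8 * C * A + (27 * C * A * A + 8 * C * B)) * q := by linarith
      _ ≤ (3 * C + 8 * C * A + (27 * C * A * A + 8 * C * B)) * (K₀ * Real.exp (-|x|)) :=
          mul_le_mul_of_nonneg_left (hQbound x) hpos
      _ ≤ _ := by linarith [Real.exp_pos (-|x|)]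
  · refine ⟨2 * C * K₀ + 1, by positivity, fun x => (h1φ x).trans ?_⟩
    have := mul_le_mul_of_nonneg_left (hQbound x) (by positivity : 0 ≤ 2 * C)
    linarith [Real.exp_pos (-|x|)]
end
end

section
/- Let f : ℝ → ℝ be of class C¹. Let Q : ℝ → ℝ be a C³ solution of Q'' + f(Q) = Q such that Q, Q', Q'', Q''' are bounded by K e^{−δ|x|} for some K, δ > 0, and let ΛQ : ℝ → ℝ be a C² function with ΛQ, ΛQ', ΛQ'' bounded by K e^{−δ|x|}, satisfying −ΛQ'' + ΛQ − f'(Q)ΛQ = −Q. Define V₀(x) = −ΛQ(x) − x·Q'(x) and Z₀ = 3Q'' + 3V₀'' + f'(Q)·V₀. Then ∫_ℝ Z₀(x) Q(x) dx = −∫_ℝ ΛQ(x) Q(x) dx. -/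
/-!
Write `W = ΛQ` and `L w = -w'' + w - f'(Q) w`. Differentiating the equation of `Q` gives `L Q' = 0`,
hence `L (x Q') = -2 Q''`, and `L W = -Q`. Pairing these two relations and using the symmetry of `L`
yields `∫ W Q'' = ½ ∫ x Q Q' = -¼ ∫ Q²`. On the other hand, eliminating `f'(Q) V₀` from `Z₀` through
the equations leaves an expression in `Q`, `W` and their derivatives only, and integrating by parts
reduces `∫ Z₀ Q` to `-∫ W Q - 2 ∫ W Q'' - ½ ∫ Q²`, in which the last two terms cancel.

All these integrations by parts are gathered into one exact derivative: with `P = x Q'`,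
`Z₀ Q + W Q = (2 (V₀' Q - V₀ Q') + (W' P - W P') + Q Q' - x Q'² - x Q²)'`.
The primitive decays exponentially, so the integral of the left-hand side vanishes. The class of
exponentially bounded functions is stable under sums, products and multiplication by `x`, and its
continuous members are integrable; this disposes of all analytic side conditions.
-/


open MeasureTheory Filter Topology Set

noncomputable section

/-- `g` is bounded by `K e^{-δ|x|}` for some `K, δ > 0`. -/
def ExpBounded (g : ℝ → ℝ) : Prop :=
  ∃ K δ : ℝ, 0 < K ∧ 0 < δ ∧ ∀ x, |g x| ≤ K * Real.exp (-δ * |x|)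

lemma ExpBounded.add {g h : ℝ → ℝ} (hg : ExpBounded g) (hh : ExpBounded h) :
    ExpBounded (fun x => g x + h x) := by
  obtain ⟨K, a, hK, ha, hg⟩ := hg
  obtain ⟨M, b, hM, hb, hh⟩ := hh
  refine ⟨K + M, min a b, by positivity, lt_min ha hb, fun x => ?_⟩
  have h1 : Real.exp (-a * |x|) ≤ Real.exp (-(min a b) * |x|) := by
    gcongr
    exact min_le_left a b
  have h2 : Real.exp (-b * |x|) ≤ Real.exp (-(min a b) * |x|) := by
    gcongr
    exact min_le_right a b
  calc |g x + h x| ≤ |g x| + |h x| := abs_add_le _ _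
    _ ≤ K * Real.exp (-a * |x|) + M * Real.exp (-b * |x|) := add_le_add (hg x) (hh x)
    _ ≤ K * Real.exp (-(min a b) * |x|) + M * Real.exp (-(min a b) * |x|) := by gcongr
    _ = _ := by ring

lemma ExpBounded.mul {g h : ℝ → ℝ} (hg : ExpBounded g) (hh : ExpBounded h) :
    ExpBounded (fun x => g x * h x) := by
  obtain ⟨K, a, hK, ha, hg⟩ := hg
  obtain ⟨M, b, hM, hb, hh⟩ := hh
  refine ⟨K * M, a + b, by positivity, by positivity, fun x => ?_⟩
  calc |g x * h x| = |g x| * |h x| := abs_mul _ _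
    _ ≤ (K * Real.exp (-a * |x|)) * (M * Real.exp (-b * |x|)) := by
      gcongr
      exacts [hg x, hh x]
    _ = K * M * (Real.exp (-a * |x|) * Real.exp (-b * |x|)) := by ring
    _ = _ := by
      rw [← Real.exp_add]
      ring_nf

lemma ExpBounded.const_mul {g : ℝ → ℝ} (hg : ExpBounded g) (c : ℝ) :
    ExpBounded (fun x => c * g x) := by
  obtain ⟨K, a, hK, ha, hg⟩ := hg
  -- The extra `1` keeps the constant positive when `c = 0`.
  refine ⟨(|c| + 1) * K, a, by positivity, ha, fun x => ?_⟩
  calc |c * g x| = |c| * |g x| := abs_mul _ _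
    _ ≤ (|c| + 1) * (K * Real.exp (-a * |x|)) := by
      gcongr
      exacts [by linarith, hg x]
    _ = _ := by ring

/-- Multiplication by `x` costs half of the decay rate, since `|x| ≤ (2/δ) e^{δ|x|/2}`. -/
lemma ExpBounded.id_mul {g : ℝ → ℝ} (hg : ExpBounded g) :
    ExpBounded (fun x => x * g x) := by
  obtain ⟨K, a, hK, ha, hg⟩ := hg
  refine ⟨2 / a * K, a / 2, by positivity, by positivity, fun x => ?_⟩
  have h1 : |x| ≤ 2 / a * Real.exp (a / 2 * |x|) := by
    have h := Real.add_one_le_exp (a / 2 * |x|)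
    calc |x| = 2 / a * (a / 2 * |x|) := by field_simp
      _ ≤ _ := by
        gcongr
        linarith
  calc |x * g x| = |x| * |g x| := abs_mul _ _
    _ ≤ (2 / a * Real.exp (a / 2 * |x|)) * (K * Real.exp (-a * |x|)) := by
      gcongr
      exact hg x
    _ = 2 / a * K * (Real.exp (a / 2 * |x|) * Real.exp (-a * |x|)) := by ring
    _ = _ := by
      rw [← Real.exp_add]
      ring_nf

lemma integrable_exp_neg_mul_abs' {a : ℝ} (ha : 0 < a) :
    Integrable (fun x : ℝ => Real.exp (-a * |x|)) := by
  rw [← integrableOn_univ, ← Set.Iic_union_Ioi (a := (0 : ℝ))]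
  refine IntegrableOn.union ?_ ?_
  · refine (integrableOn_exp_mul_Iic ha 0).congr_fun (fun x hx => ?_) measurableSet_Iic
    simp [abs_of_nonpos (show x ≤ 0 from hx)]
  · refine (integrableOn_exp_mul_Ioi (neg_neg_of_pos ha) 0).congr_fun (fun x hx => ?_)
      measurableSet_Ioi
    simp [abs_of_pos (show 0 < x from hx)]

lemma ExpBounded.integrable {g : ℝ → ℝ} (hg : ExpBounded g) (hc : Continuous g) :
    Integrable g := by
  obtain ⟨K, a, hK, ha, hg⟩ := hg
  exact ((integrable_exp_neg_mul_abs' ha).const_mul K).mono' hc.aestronglyMeasurable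
    (Eventually.of_forall hg)

lemma ExpBounded.tendsto {g : ℝ → ℝ} (hg : ExpBounded g) {l : Filter ℝ}
    (hl : Tendsto (fun x : ℝ => |x|) l atTop) : Tendsto g l (𝓝 0) := by
  obtain ⟨K, a, hK, ha, hg⟩ := hg
  have h1 : Tendsto (fun x : ℝ => -a * |x|) l atBot :=
    hl.const_mul_atTop_of_neg (neg_neg_of_pos ha)
  have h2 := (Real.tendsto_exp_atBot.comp h1).const_mul K
  rw [mul_zero] at h2
  exact squeeze_zero_norm hg h2

/-- A derivative that is continuous and exponentially bounded, with an exponentially bounded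
primitive, has integral zero over `ℝ`. -/
lemma integral_eq_zero_of_expBounded {F G : ℝ → ℝ} (hF : ∀ x, HasDerivAt F (G x) x)
    (hFb : ExpBounded F) (hGb : ExpBounded G) (hGc : Continuous G) : ∫ x, G x = 0 := by
  simpa using integral_of_hasDerivAt_of_tendsto hF (hGb.integrable hGc)
    (hFb.tendsto tendsto_abs_atBot_atTop) (hFb.tendsto tendsto_abs_atTop_atTop)

/-- Nondegeneracy identity `∫ Z₀ Q = -∫ ΛQ Q`. -/
theorem nondegeneracy_identity_Z0
    (f : ℝ → ℝ) (hf : ContDiff ℝ 1 f)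
    (Q : ℝ → ℝ) (hQreg : ContDiff ℝ 3 Q)
    (hQeq : ∀ x, deriv (deriv Q) x + f (Q x) = Q x)
    (hQb : ExpBounded Q) (hQ'b : ExpBounded (deriv Q))
    (hQ''b : ExpBounded (deriv (deriv Q)))
    (hQ'''b : ExpBounded (deriv (deriv (deriv Q))))
    (ΛQ : ℝ → ℝ) (hΛreg : ContDiff ℝ 2 ΛQ)
    (hΛb : ExpBounded ΛQ) (hΛ'b : ExpBounded (deriv ΛQ))
    (hΛ''b : ExpBounded (deriv (deriv ΛQ)))
    (hΛeq : ∀ x, -(deriv (deriv ΛQ) x) + ΛQ x - deriv f (Q x) * ΛQ x = -Q x)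
    (V₀ : ℝ → ℝ) (hV₀ : ∀ x, V₀ x = -ΛQ x - x * deriv Q x)
    (Z₀ : ℝ → ℝ)
    (hZ₀ : ∀ x, Z₀ x = 3 * deriv (deriv Q) x + 3 * deriv (deriv V₀) x
        + deriv f (Q x) * V₀ x) :
    ∫ x : ℝ, Z₀ x * Q x = -∫ x : ℝ, ΛQ x * Q x := by
  have hQ1 : ContDiff ℝ 2 (deriv Q) := ContDiff.deriv' (n := 2) (by exact_mod_cast hQreg)
  have hQ2 : ContDiff ℝ 1 (deriv (deriv Q)) := ContDiff.deriv' (n := 1) (by exact_mod_cast hQ1)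
  have hQ3 : Continuous (deriv (deriv (deriv Q))) := hQ2.continuous_deriv le_rfl
  have hW1 : ContDiff ℝ 1 (deriv ΛQ) := ContDiff.deriv' (n := 1) (by exact_mod_cast hΛreg)
  have hW2 : Continuous (deriv (deriv ΛQ)) := hW1.continuous_deriv le_rfl
  have dq0 : ∀ x, HasDerivAt Q (deriv Q x) x := fun x =>
    (hQreg.differentiable (by norm_num) x).hasDerivAt
  have dq1 : ∀ x, HasDerivAt (deriv Q) (deriv (deriv Q) x) x := fun x =>
    (hQ1.differentiable (by norm_num) x).hasDerivAt
  have dq2 : ∀ x, HasDerivAt (deriv (deriv Q)) (deriv (deriv (deriv Q)) x) x := fun x =>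
    (hQ2.differentiable (by norm_num) x).hasDerivAt
  have dw0 : ∀ x, HasDerivAt ΛQ (deriv ΛQ x) x := fun x =>
    (hΛreg.differentiable (by norm_num) x).hasDerivAt
  have dw1 : ∀ x, HasDerivAt (deriv ΛQ) (deriv (deriv ΛQ) x) x := fun x =>
    (hW1.differentiable (by norm_num) x).hasDerivAt
  -- The relation `L Q' = 0`.
  have hQ' : ∀ x, deriv (deriv (deriv Q)) x + deriv f (Q x) * deriv Q x = deriv Q x := by
    intro x
    have df : HasDerivAt f (deriv f (Q x)) (Q x) :=
      (hf.differentiable (by norm_num) (Q x)).hasDerivAt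
    have h := (dq2 x).add (df.comp x (dq0 x))
    have e : deriv (deriv Q) + f ∘ Q = Q := funext hQeq
    rw [e] at h
    exact h.unique (dq0 x)
  have hVfun : V₀ = fun x => -ΛQ x - x * deriv Q x := funext hV₀
  have dV : ∀ x, HasDerivAt V₀ (-deriv ΛQ x - (deriv Q x + x * deriv (deriv Q) x)) x := by
    intro x
    rw [hVfun]
    exact ((dw0 x).neg.sub ((hasDerivAt_id' x).mul (dq1 x))).congr_deriv (by ring)
  have hV1 : deriv V₀ = fun x => -deriv ΛQ x - (deriv Q x + x * deriv (deriv Q) x) :=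
    funext fun x => (dV x).deriv
  have hV2 : ∀ x, deriv (deriv V₀) x
      = -deriv (deriv ΛQ) x - (2 * deriv (deriv Q) x + x * deriv (deriv (deriv Q)) x) := by
    intro x
    rw [hV1]
    refine HasDerivAt.deriv ?_
    exact ((dw1 x).neg.sub ((dq1 x).add ((hasDerivAt_id' x).mul (dq2 x)))).congr_deriv (by ring)
  generalize hq1 : deriv Q = q1 at *
  generalize hq2 : deriv q1 = q2 at *
  generalize hq3 : deriv q2 = q3 at *
  generalize hw1 : deriv ΛQ = w1 at *
  generalize hw2 : deriv w1 = w2 at *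
  have hQc := hQreg.continuous
  have hq1c := hQ1.continuous
  have hq2c := hQ2.continuous
  have hWc := hΛreg.continuous
  have hZ : ∀ x, Z₀ x * Q x =
      (-3 * q2 x + -2 * w2 x + -2 * (x * q3 x) + -1 * Q x + -1 * (x * q1 x)) * Q x
        + -1 * (ΛQ x * Q x) := by
    intro x
    rw [hZ₀, hV2, hV₀]
    linear_combination (-(x * Q x)) * hQ' x + Q x * hΛeq x
  have hGb : ExpBounded fun x =>
      (-3 * q2 x + -2 * w2 x + -2 * (x * q3 x) + -1 * Q x + -1 * (x * q1 x)) * Q x :=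
    (((((hQ''b.const_mul _).add (hΛ''b.const_mul _)).add
      (hQ'''b.id_mul.const_mul _)).add (hQb.const_mul _)).add
      (hQ'b.id_mul.const_mul _)).mul hQb
  have hG0 : ∫ x, (-3 * q2 x + -2 * w2 x + -2 * (x * q3 x) + -1 * Q x + -1 * (x * q1 x)) * Q x
      = 0 := by
    refine integral_eq_zero_of_expBounded
      (F := fun x => 2 * ((-1 * w1 x + -1 * q1 x + -1 * (x * q2 x)) * Q x
          + (ΛQ x + x * q1 x) * q1 x) + w1 x * (x * q1 x) + -1 * (ΛQ x * (q1 x + x * q2 x))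
          + Q x * q1 x + -1 * (x * (q1 x * q1 x)) + -1 * (x * (Q x * Q x))) ?_ ?_ ?_ ?_
    · intro x
      have dx := hasDerivAt_id' x
      have h := (((((((((dw1 x).const_mul (-1)).add ((dq1 x).const_mul (-1))).add
        ((dx.mul (dq2 x)).const_mul (-1))).mul (dq0 x)).add
        (((dw0 x).add (dx.mul (dq1 x))).mul (dq1 x))).const_mul 2).add
        ((dw1 x).mul (dx.mul (dq1 x)))).add
        (((dw0 x).mul ((dq1 x).add (dx.mul (dq2 x)))).const_mul (-1))).add
        ((dq0 x).mul (dq1 x))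
      have h' := (h.add ((dx.mul ((dq1 x).mul (dq1 x))).const_mul (-1))).add
        ((dx.mul ((dq0 x).mul (dq0 x))).const_mul (-1))
      refine h'.congr_deriv ?_
      simp only [Pi.mul_apply, Pi.add_apply]
      -- Symmetry of `L`: the zeroth-order terms cancel between `W'' P` and `W P''`.
      linear_combination (-(x * q1 x)) * hΛeq x + (-(x * ΛQ x)) * hQ' x
    · exact ((((((((((hΛ'b.const_mul _).add (hQ'b.const_mul _)).add
        (hQ''b.id_mul.const_mul _)).mul hQb).add
        ((hΛb.add hQ'b.id_mul).mul hQ'b)).const_mul 2).add (hΛ'b.mul hQ'b.id_mul)).add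
        ((hΛb.mul (hQ'b.add hQ''b.id_mul)).const_mul _)).add (hQb.mul hQ'b)).add
        ((hQ'b.mul hQ'b).id_mul.const_mul _)).add ((hQb.mul hQb).id_mul.const_mul _)
    · exact hGb
    · fun_prop
  have hGi : Integrable fun x =>
      (-3 * q2 x + -2 * w2 x + -2 * (x * q3 x) + -1 * Q x + -1 * (x * q1 x)) * Q x :=
    hGb.integrable (by fun_prop)
  have hWi : Integrable fun x => -1 * (ΛQ x * Q x) :=
    ((hΛb.mul hQb).const_mul (-1)).integrable (by fun_prop)
  simp_rw [hZ]
  rw [integral_add hGi hWi, hG0, integral_const_mul]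
  ring
end
end

section
/- Let f : ℝ → ℝ be of class C¹ and let Q : ℝ → ℝ be a C² solution of Q'' + f(Q) = Q such that Q, Q', Q'' are bounded by K e^{−δ|x|} for some K, δ > 0. Then −∫_ℝ x·Q'(x)·(3Q''(x) + Q(x)·f'(Q(x))) dx = 2∫_ℝ (Q'(x))² dx − (1/2)∫_ℝ Q(x)² dx + ∫_ℝ Q(x) f(Q(x)) dx. -/
/-!
Writing `q = Q'`, the equation `Q'' = Q - f(Q)` turns the integrand into a total derivative up to
terms without the factor `x`:
`x q (3 Q'' + Q f'(Q)) = (2 x q² - x Q² / 2 + x Q f(Q))' - (2 q² - Q² / 2 + Q f(Q))`.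
Only `(f ∘ Q)' = f'(Q) q` is used to differentiate `f(Q)`, so no third derivative of `Q` occurs.
The exponential bounds make every term integrable, including the function under the derivative,
and an integrable function with integrable derivative has a derivative of integral zero
(`integral_eq_zero_of_hasDerivAt_of_integrable`).
-/

open MeasureTheory Filter Topology Set

noncomputable section

/-- The weight `|x| + 1` absorbs the factor `x` while covering the unweighted case as well. -/
theorem integrable_abs_add_one_mul_exp {δ : ℝ} (hδ : 0 < δ) :
    Integrable (fun x : ℝ => (|x| + 1) * Real.exp (-δ * |x|)) := by
  have h1 : IntegrableOn (fun x : ℝ => (x + 1) * Real.exp (-δ * x)) (Ioi 0) := by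
    have h2 := integrableOn_rpow_mul_exp_neg_mul_rpow (p := 1) (s := 1) (b := δ)
      (by norm_num) (by norm_num) hδ
    have h3 := integrableOn_rpow_mul_exp_neg_mul_rpow (p := 1) (s := 0) (b := δ)
      (by norm_num) (by norm_num) hδ
    refine (h2.add h3).congr_fun (fun x _ => ?_) measurableSet_Ioi
    simp only [Pi.add_apply, Real.rpow_one, Real.rpow_zero]
    ring
  have hpos : IntegrableOn (fun x : ℝ => (|x| + 1) * Real.exp (-δ * |x|)) (Ioi 0) :=
    h1.congr_fun (fun x hx => by simp only [abs_of_pos (mem_Ioi.1 hx)]) measurableSet_Ioi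
  have hneg : IntegrableOn (fun x : ℝ => (|x| + 1) * Real.exp (-δ * |x|)) (Iic 0) := by
    -- The function is even, so the left half-line reduces to the right one by `x ↦ -x`.
    rw [← Measure.map_neg_eq_self (volume : Measure ℝ)]
    have m : MeasurableEmbedding fun x : ℝ => -x := (Homeomorph.neg ℝ).measurableEmbedding
    rw [m.integrableOn_map_iff]
    simp_rw [Function.comp_def, abs_neg, neg_preimage, neg_Iic, neg_zero]
    exact Iff.mpr integrableOn_Ici_iff_integrableOn_Ioi hpos
  rw [← integrableOn_univ, ← Iic_union_Ioi (a := (0 : ℝ))]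
  exact hneg.union hpos

theorem ExpBounded.bounded {g : ℝ → ℝ} (hg : ExpBounded g) : ∃ M, ∀ x, |g x| ≤ M := by
  obtain ⟨K, δ, hK, hδ, h⟩ := hg
  refine ⟨K, fun x => (h x).trans (mul_le_of_le_one_right hK.le (Real.exp_le_one_iff.2 ?_))⟩
  nlinarith [abs_nonneg x]

theorem ExpBounded.integrable_id_mul_mul {g h : ℝ → ℝ} (hg : ExpBounded g) (hgc : Continuous g)
    (hhc : Continuous h) (hb : ∃ M, ∀ x, |h x| ≤ M) :
    Integrable (fun x => x * g x * h x) := by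
  obtain ⟨K, δ, hK, hδ, hgb⟩ := hg
  obtain ⟨M, hM⟩ := hb
  refine ((integrable_abs_add_one_mul_exp hδ).const_mul (K * M)).mono'
    (by fun_prop) (ae_of_all _ fun x => ?_)
  rw [Real.norm_eq_abs, abs_mul, abs_mul]
  calc |x| * |g x| * |h x| ≤ (|x| + 1) * (K * Real.exp (-δ * |x|)) * M := by
        gcongr
        · linarith
        · exact hgb x
        · exact hM x
    _ = _ := by ring

theorem ExpBounded.integrable_mul {g h : ℝ → ℝ} (hg : ExpBounded g) (hgc : Continuous g)
    (hhc : Continuous h) (hb : ∃ M, ∀ x, |h x| ≤ M) :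
    Integrable (fun x => g x * h x) := by
  obtain ⟨K, δ, hK, hδ, hgb⟩ := hg
  obtain ⟨M, hM⟩ := hb
  refine ((integrable_abs_add_one_mul_exp hδ).const_mul (K * M)).mono'
    (by fun_prop) (ae_of_all _ fun x => ?_)
  rw [Real.norm_eq_abs, abs_mul]
  calc |g x| * |h x| ≤ 1 * (K * Real.exp (-δ * |x|)) * M := by
        rw [one_mul]
        gcongr
        · exact hgb x
        · exact hM x
    _ ≤ (|x| + 1) * (K * Real.exp (-δ * |x|)) * M := by
        have : 0 ≤ M := (abs_nonneg _).trans (hM x)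
        gcongr
        linarith [abs_nonneg x]
    _ = _ := by ring

/-- Integration by parts identity with `x Q'`. -/
theorem xQprime_integral_identity
    (f : ℝ → ℝ) (hf : ContDiff ℝ 1 f)
    (Q : ℝ → ℝ) (hQreg : ContDiff ℝ 2 Q)
    (hQeq : ∀ x, deriv (deriv Q) x + f (Q x) = Q x)
    (hQb : ExpBounded Q) (hQ'b : ExpBounded (deriv Q))
    (hQ''b : ExpBounded (deriv (deriv Q))) :
    -∫ x : ℝ, x * deriv Q x * (3 * deriv (deriv Q) x + Q x * deriv f (Q x))
      = 2 * (∫ x : ℝ, (deriv Q x) ^ 2) - (1/2) * (∫ x : ℝ, (Q x) ^ 2)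
        + ∫ x : ℝ, Q x * f (Q x) := by
  have hQ1 : ContDiff ℝ 1 (deriv Q) := hQreg.deriv' (n := 1)
  have hc0 : Continuous Q := hQreg.continuous
  have hc1 : Continuous (deriv Q) := hQ1.continuous
  have hc2 : Continuous (deriv (deriv Q)) := hQ1.continuous_deriv le_rfl
  have hcf : Continuous fun x => f (Q x) := hf.continuous.comp hc0
  have hcf' : Continuous fun x => deriv f (Q x) := (hf.continuous_deriv le_rfl).comp hc0
  have hd0 (x : ℝ) : HasDerivAt Q (deriv Q x) x :=
    (hQreg.differentiable (by norm_num) x).hasDerivAt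
  have hd1 (x : ℝ) : HasDerivAt (deriv Q) (deriv (deriv Q) x) x :=
    (hQ1.differentiable (by norm_num) x).hasDerivAt
  have hdf (x : ℝ) : HasDerivAt (fun x => f (Q x)) (deriv f (Q x) * deriv Q x) x :=
    (hf.differentiable (by norm_num) (Q x)).hasDerivAt.comp x (hd0 x)
  obtain ⟨M₀, hM₀⟩ := hQb.bounded
  obtain ⟨M₂, hM₂⟩ := hQ''b.bounded
  -- By the equation, `f ∘ Q` is a difference of bounded functions.
  have hbf : ∃ M, ∀ x, |f (Q x)| ≤ M := by
    refine ⟨M₀ + M₂, fun x => ?_⟩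
    rw [show f (Q x) = Q x - deriv (deriv Q) x by linarith [hQeq x]]
    exact (abs_sub _ _).trans (add_le_add (hM₀ x) (hM₂ x))
  -- `deriv f ∘ Q` is bounded because `Q` takes values in a compact interval.
  have hbI : ∃ M, ∀ x, |3 * deriv (deriv Q) x + Q x * deriv f (Q x)| ≤ M := by
    obtain ⟨C, hC⟩ := (isCompact_Icc (a := -M₀) (b := M₀)).exists_bound_of_continuousOn
      (hf.continuous_deriv le_rfl).continuousOn
    refine ⟨3 * M₂ + M₀ * C, fun x => (abs_add_le _ _).trans ?_⟩
    rw [abs_mul, abs_mul, abs_of_pos (by norm_num : (0 : ℝ) < 3)]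
    have : 0 ≤ M₀ := (abs_nonneg _).trans (hM₀ x)
    gcongr
    · exact hM₂ x
    · exact hM₀ x
    · exact hC _ (abs_le.1 (hM₀ x))
  have hI := hQ'b.integrable_id_mul_mul hc1 (by fun_prop) hbI
  have hq2 := hQ'b.integrable_mul hc1 hc1 hQ'b.bounded
  have hQ2 := hQb.integrable_mul hc0 hc0 hQb.bounded
  have hQf := hQb.integrable_mul hc0 hcf hbf
  have hxq2 := hQ'b.integrable_id_mul_mul hc1 hc1 hQ'b.bounded
  have hxQ2 := hQb.integrable_id_mul_mul hc0 hc0 hQb.bounded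
  have hxQf := hQb.integrable_id_mul_mul hc0 hcf hbf
  have hderiv (x : ℝ) : HasDerivAt
      (fun x => 2 * (x * deriv Q x * deriv Q x) - 1 / 2 * (x * Q x * Q x) + x * Q x * f (Q x))
      (x * deriv Q x * (3 * deriv (deriv Q) x + Q x * deriv f (Q x))
        + (2 * (deriv Q x * deriv Q x) - 1 / 2 * (Q x * Q x) + Q x * f (Q x))) x := by
    have hx := hasDerivAt_id' x
    refine ((((hx.fun_mul (hd1 x)).fun_mul (hd1 x)).const_mul 2).fun_sub
      (((hx.fun_mul (hd0 x)).fun_mul (hd0 x)).const_mul (1 / 2)) |>.fun_add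
      ((hx.fun_mul (hd0 x)).fun_mul (hdf x))).congr_deriv ?_
    -- The equation cancels the leftover terms, all of which carry the factor `x * deriv Q x`.
    linear_combination x * deriv Q x * hQeq x
  have hA : Integrable (fun x => 2 * (deriv Q x * deriv Q x) - 1 / 2 * (Q x * Q x)) :=
    (hq2.const_mul 2).sub (hQ2.const_mul (1 / 2))
  have hB : Integrable (fun x => 2 * (deriv Q x * deriv Q x) - 1 / 2 * (Q x * Q x)
      + Q x * f (Q x)) := hA.add hQf
  have key := integral_eq_zero_of_hasDerivAt_of_integrable hderiv
    (hI.add hB)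
    (((hxq2.const_mul 2).sub (hxQ2.const_mul (1 / 2))).add hxQf)
  rw [integral_add hI hB, integral_add hA hQf,
    integral_sub (hq2.const_mul 2) (hQ2.const_mul (1 / 2)), integral_const_mul,
    integral_const_mul] at key
  simp only [pow_two]
  linarith
end
end
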